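/- arXiv:2405.04329 — 2 statements merged into one kernel-verified Lean document; each statement's English description precedes it below -/
import Mathlib

section
/- Let p be a prime and N ≥ 0 an integer. Let M and M' be n × m matrices over the ring ℤ_p of p-adic integers such that every entry of M − M' is divisible by p^{N+1}. Let Q = ℤ_p^n / M·(ℤ_p^m) and Q' = ℤ_p^n / M'·(ℤ_p^m) be the cokernels of the associated ℤ_p-linear maps. If the torsion submodules of Q and of Q' are both annihilated by p^N, then Q and Q' are isomorphic as ℤ_p-modules. -/
theorem surj_core (p : ℕ) [Fact p.Prime] (N n : ℕ)
    (I I' : Submodule ℤ_[p] (Fin n → ℤ_[p]))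
    (hdiff : ∀ x ∈ I, ∃ w, x + (p : ℤ_[p]) ^ (N + 1) • w ∈ I')
    (hQ : ∀ (a : ℤ_[p]) (x : Fin n → ℤ_[p]), a ≠ 0 → a • x ∈ I → (p : ℤ_[p]) ^ N • x ∈ I) :
    ∃ g : (Fin n → ℤ_[p]) →ₗ[ℤ_[p]] (Fin n → ℤ_[p]), Function.Surjective g ∧
      I ≤ I'.comap g := by
  obtain ⟨k, snf⟩ := Submodule.smithNormalForm (Pi.basisFun ℤ_[p] (Fin n)) I
  have ha : ∀ i, snf.a i ≠ 0 := by
    intro i h0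
    have h := snf.snf i
    rw [h0, zero_smul] at h
    exact snf.bN.ne_zero i (Subtype.ext h)
  have hc : ∀ i, ∃ c, (p : ℤ_[p]) ^ N = snf.a i * c := by
    intro i
    have h1 := hQ (snf.a i) (snf.bM (snf.f i)) (ha i) (by
      rw [← snf.snf i]
      exact (snf.bN i).2)
    have h2 := snf.repr_apply_embedding_eq_repr_smul (m := ⟨_, h1⟩) (i := i)
    rw [map_smul, map_smul, Finsupp.smul_apply, Finsupp.smul_apply, Module.Basis.repr_self,
      Finsupp.single_eq_same, smul_eq_mul, smul_eq_mul, mul_one] at h2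
    exact ⟨_, h2⟩
  have hw : ∀ i, ∃ w : Fin n → ℤ_[p], snf.a i • (snf.bM (snf.f i) + (p : ℤ_[p]) • w) ∈ I' := by
    intro i
    obtain ⟨c, hc⟩ := hc i
    obtain ⟨w, hw⟩ := hdiff _ (snf.bN i).2
    refine ⟨c • w, ?_⟩
    convert hw using 1
    rw [snf.snf i, smul_add, smul_smul, smul_smul, pow_succ, hc]
    congr 2
    ring
  choose w hw using hw
  obtain ⟨h, hh⟩ : ∃ h : (Fin n → ℤ_[p]) →ₗ[ℤ_[p]] (Fin n → ℤ_[p]),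
      ∀ i, h (snf.bM (snf.f i)) = w i :=
    ⟨snf.bM.constr ℤ_[p] (Function.extend snf.f w 0), fun i => by
      rw [Module.Basis.constr_basis, snf.f.injective.extend_apply]⟩
  obtain ⟨g, hg⟩ : ∃ g : (Fin n → ℤ_[p]) →ₗ[ℤ_[p]] (Fin n → ℤ_[p]),
      ∀ x, g x = x + (p : ℤ_[p]) • h x := ⟨LinearMap.id + (p : ℤ_[p]) • h, fun x => rfl⟩
  refine ⟨g, ?_, ?_⟩
  · rw [← LinearMap.range_eq_top, eq_top_iff]
    refine Submodule.le_of_le_smul_of_le_jacobson_bot (I := IsLocalRing.maximalIdeal ℤ_[p])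
      Module.Finite.fg_top ?_ ?_
    · exact IsLocalRing.maximalIdeal_le_jacobson _
    · intro x _
      have hx : x = g x + (p : ℤ_[p]) • (-h x) := by rw [hg, smul_neg]; abel
      rw [hx]
      refine Submodule.add_mem_sup ⟨x, rfl⟩ (Submodule.smul_mem_smul ?_ trivial)
      rw [PadicInt.maximalIdeal_eq_span_p]
      exact Ideal.mem_span_singleton_self _
  · intro x hx
    have key : Submodule.span ℤ_[p] (Set.range snf.bN) ≤
        (I'.comap g).comap I.subtype := by
      rw [Submodule.span_le]
      rintro _ ⟨i, rfl⟩
      rw [SetLike.mem_coe, Submodule.mem_comap, Submodule.mem_comap, Submodule.subtype_apply,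
        snf.snf i, map_smul, hg, hh]
      exact hw i
    rw [snf.bN.span_eq] at key
    exact key (x := ⟨x, hx⟩) trivial

theorem surj_aux (p : ℕ) [Fact p.Prime] (N n m : ℕ)
    (M M' : Matrix (Fin n) (Fin m) ℤ_[p])
    (hMM' : ∀ i j, (p : ℤ_[p]) ^ (N + 1) ∣ (M i j - M' i j))
    (hQ : ∀ x ∈ Submodule.torsion ℤ_[p]
        ((Fin n → ℤ_[p]) ⧸ LinearMap.range (Matrix.mulVecLin M)),
      (p : ℤ_[p]) ^ N • x = 0) :
    ∃ φ : ((Fin n → ℤ_[p]) ⧸ LinearMap.range (Matrix.mulVecLin M)) →ₗ[ℤ_[p]]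
      ((Fin n → ℤ_[p]) ⧸ LinearMap.range (Matrix.mulVecLin M')), Function.Surjective φ := by
  have hdiff : ∀ x ∈ LinearMap.range (Matrix.mulVecLin M), ∃ w : Fin n → ℤ_[p],
      x + (p : ℤ_[p]) ^ (N + 1) • w ∈ LinearMap.range (Matrix.mulVecLin M') := by
    choose D hD using hMM'
    rintro _ ⟨v, rfl⟩
    refine ⟨-(Matrix.of D).mulVec v, v, ?_⟩
    have h : M = M' + (p : ℤ_[p]) ^ (N + 1) • Matrix.of D := by
      ext i j
      simp [← hD]
    rw [h, Matrix.mulVecLin_apply, Matrix.mulVecLin_apply, Matrix.add_mulVec, Matrix.smul_mulVec,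
      smul_neg, add_neg_cancel_right]
  obtain ⟨g, hg, hle⟩ := surj_core p N n _ _ hdiff (by
    intro a x ha hx
    rw [← Submodule.Quotient.mk_eq_zero, Submodule.Quotient.mk_smul] at hx ⊢
    exact hQ _ ((Submodule.mem_torsion_iff _).2
      ⟨⟨a, mem_nonZeroDivisors_of_ne_zero ha⟩, hx⟩))
  refine ⟨Submodule.mapQ _ _ g hle, ?_⟩
  intro y
  obtain ⟨y, rfl⟩ := Submodule.Quotient.mk_surjective _ y
  obtain ⟨x, rfl⟩ := hg y
  exact ⟨Submodule.Quotient.mk x, rfl⟩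

theorem statement9 (p : ℕ) [Fact p.Prime] (N n m : ℕ)
    (M M' : Matrix (Fin n) (Fin m) ℤ_[p])
    (hMM' : ∀ i j, (p : ℤ_[p]) ^ (N + 1) ∣ (M i j - M' i j))
    (hQ : ∀ x ∈ Submodule.torsion ℤ_[p]
        ((Fin n → ℤ_[p]) ⧸ LinearMap.range (Matrix.mulVecLin M)),
      (p : ℤ_[p]) ^ N • x = 0)
    (hQ' : ∀ x ∈ Submodule.torsion ℤ_[p]
        ((Fin n → ℤ_[p]) ⧸ LinearMap.range (Matrix.mulVecLin M')),
      (p : ℤ_[p]) ^ N • x = 0) :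
    Nonempty (((Fin n → ℤ_[p]) ⧸ LinearMap.range (Matrix.mulVecLin M)) ≃ₗ[ℤ_[p]]
      ((Fin n → ℤ_[p]) ⧸ LinearMap.range (Matrix.mulVecLin M'))) := by
  obtain ⟨φ, hφ⟩ := surj_aux p N n m M M' hMM' hQ
  obtain ⟨ψ, hψ⟩ := surj_aux p N n m M' M (fun i j => (dvd_sub_comm).1 (hMM' i j)) hQ'
  have hinj : Function.Injective (ψ ∘ₗ φ) :=
    OrzechProperty.injective_of_surjective_endomorphism _ (by
      rw [LinearMap.coe_comp]; exact hψ.comp hφ)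
  rw [LinearMap.coe_comp] at hinj
  exact ⟨LinearEquiv.ofBijective φ ⟨hinj.of_comp, hφ⟩⟩
end

section
/- Let p be a prime and N ≥ 0 an integer. Let M and M' be n × m matrices over the ring ℤ_p of p-adic integers such that every entry of M − M' is divisible by p^N, and such that M and M' have equal rank (the dimension over the fraction field ℚ_p of the span of the columns). Let Q = ℤ_p^n / M·(ℤ_p^m) and Q' = ℤ_p^n / M'·(ℤ_p^m). If the torsion submodules of Q and of Q' are both annihilated by p^N, then Q and Q' are isomorphic as ℤ_p-modules. -/
open TensorProduct

lemma aux_card_quot (p : ℕ) [Fact p.Prime] (k : ℕ) :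
    Nat.card (ℤ_[p] ⧸ Ideal.span {(p : ℤ_[p]) ^ k}) = p ^ k := by
  have h : Function.Surjective (PadicInt.toZModPow k : ℤ_[p] →+* ZMod (p ^ k)) :=
    ZMod.ringHom_surjective _
  rw [← PadicInt.ker_toZModPow,
    Nat.card_congr (RingHom.quotientKerEquivOfSurjective h).toEquiv, Nat.card_zmod]

lemma aux_sup (p : ℕ) [Fact p.Prime] (k e : ℕ) :
    Ideal.span {(p : ℤ_[p]) ^ e} ⊔ Ideal.span {(p : ℤ_[p]) ^ k} =
      Ideal.span {(p : ℤ_[p]) ^ (min k e)} := by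
  rcases le_total k e with h | h
  · rw [min_eq_left h, sup_eq_right, Ideal.span_singleton_le_span_singleton]
    exact pow_dvd_pow _ h
  · rw [min_eq_right h, sup_eq_left, Ideal.span_singleton_le_span_singleton]
    exact pow_dvd_pow _ h

lemma aux_map {R M : Type*} [CommRing R] [AddCommGroup M] [Module R M] (S : Submodule R M)
    (I : Ideal R) : (I • (⊤ : Submodule R M)).map S.mkQ = I • (⊤ : Submodule R (M ⧸ S)) := by
  rw [Submodule.map_smul'', Submodule.map_top, Submodule.range_mkQ]

lemma aux_card_tensor (p : ℕ) [Fact p.Prime] (k e : ℕ) :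
    Nat.card ((ℤ_[p] ⧸ Ideal.span {(p : ℤ_[p]) ^ k}) ⊗[ℤ_[p]]
      (ℤ_[p] ⧸ Ideal.span {(p : ℤ_[p]) ^ e})) = p ^ min k e := by
  rw [← aux_card_quot p (min k e), ← aux_sup]
  rw [Nat.card_congr (TensorProduct.quotTensorEquivQuotSMul _ _).toEquiv]
  have h : Ideal.span {(p : ℤ_[p]) ^ k} •
      (⊤ : Submodule ℤ_[p] (ℤ_[p] ⧸ Ideal.span {(p : ℤ_[p]) ^ e})) =
      Submodule.map (Submodule.mkQ (Ideal.span {(p : ℤ_[p]) ^ e}))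
        (Ideal.span {(p : ℤ_[p]) ^ k}) := by
    rw [← aux_map, smul_eq_mul, Ideal.mul_top]
  rw [h]
  exact Nat.card_congr (Submodule.quotientQuotientEquivQuotientSup
    (Ideal.span {(p : ℤ_[p]) ^ e}) (Ideal.span {(p : ℤ_[p]) ^ k})).toEquiv

lemma aux_card (p : ℕ) [Fact p.Prime] (k r : ℕ) {ι : Type*} [Fintype ι] (e : ι → ℕ) 
    {Q : Type*} [AddCommGroup Q] [Module ℤ_[p] Q]
    (f : Q ≃ₗ[ℤ_[p]] (Fin r → ℤ_[p]) × ((i : ι) → ℤ_[p] ⧸ Ideal.span {(p : ℤ_[p]) ^ e i})) :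
    Nat.card (Q ⧸ (Ideal.span {(p : ℤ_[p]) ^ k} • (⊤ : Submodule ℤ_[p] Q))) =
      p ^ (k * r + ∑ i, min k (e i)) := by
  classical
  rw [← Nat.card_congr (TensorProduct.quotTensorEquivQuotSMul Q _).toEquiv,
    Nat.card_congr (f.lTensor _).toEquiv,
    Nat.card_congr (TensorProduct.prodRight ℤ_[p] ℤ_[p] _ _ _).toEquiv, Nat.card_prod,
    Nat.card_congr (TensorProduct.piRight ℤ_[p] ℤ_[p] _ _).toEquiv,
    Nat.card_congr (TensorProduct.piRight ℤ_[p] ℤ_[p] _ _).toEquiv, Nat.card_pi, Nat.card_pi,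
    Finset.prod_congr rfl (fun i _ => aux_card_tensor p k (e i)),
    Finset.prod_congr rfl (fun i _ => Nat.card_congr (TensorProduct.rid ℤ_[p] _).toEquiv),
    Finset.prod_congr rfl (fun i _ => aux_card_quot p k), pow_add, ← Finset.prod_pow_eq_pow_sum]
  rw [Finset.prod_const, Finset.card_univ, Fintype.card_fin, pow_mul]

lemma aux_comb (N : ℕ) {ι ι' : Type*} [Fintype ι] [Fintype ι'] (e : ι → ℕ) (e' : ι' → ℕ)
    (h0 : ∀ i, e i ≠ 0) (h0' : ∀ i, e' i ≠ 0) (hN : ∀ i, e i ≤ N) (hN' : ∀ i, e' i ≤ N)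
    (hs : ∀ k ≤ N, ∑ i, min k (e i) = ∑ i, min k (e' i)) :
    ∃ f : ι ≃ ι', ∀ i, e' (f i) = e i := by
  classical
  have hs' : ∀ k, ∑ i, min k (e i) = ∑ i, min k (e' i) := by
    intro k
    have := hs (min k N) (min_le_right _ _)
    simpa only [min_assoc, min_eq_right (hN _), min_eq_right (hN' _)] using this
  have key : ∀ {κ : Type _} [Fintype κ] (e : κ → ℕ) (j : ℕ),
      2 * ∑ i, min (j+1) (e i) = ∑ i, min j (e i) + ∑ i, min (j+2) (e i) +
        Fintype.card {i // e i = j + 1} := by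
    intro κ _ e j
    rw [Fintype.card_subtype, Finset.card_filter, Finset.mul_sum, ← Finset.sum_add_distrib,
      ← Finset.sum_add_distrib]
    refine Finset.sum_congr rfl fun i _ => ?_
    split_ifs <;> omega
  have key' : ∀ {κ : Type _} [Fintype κ] (e : κ → ℕ) (j : ℕ),
      2 * ∑ i, min (j+1) (e i) = ∑ i, min j (e i) + ∑ i, min (j+2) (e i) +
        Fintype.card {i // e i = j + 1} := by
    intro κ _ e j
    rw [Fintype.card_subtype, Finset.card_filter, Finset.mul_sum, ← Finset.sum_add_distrib,
      ← Finset.sum_add_distrib]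
    refine Finset.sum_congr rfl fun i _ => ?_
    split_ifs <;> omega
  have hc : ∀ c, Nonempty ({i // e i = c} ≃ {i // e' i = c}) := by
    intro c
    cases c with
    | zero => exact ⟨Equiv.ofFiberEquiv (γ := Unit) (f := fun _ => ()) (g := fun _ => ())
        fun _ => ⟨fun x => (h0 _ x.1.2).elim, fun x => (h0' _ x.1.2).elim,
          fun x => (h0 _ x.1.2).elim, fun x => (h0' _ x.1.2).elim⟩⟩
    | succ j =>
      refine Fintype.card_eq.mp ?_
      have h1 := key e j
      have h2 := key' e' j
      rw [hs', hs', hs'] at h1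
      omega
  let f := fun c => (hc c).some
  exact ⟨Equiv.ofFiberEquiv f, Equiv.ofFiberEquiv_map f⟩

lemma aux_rank (p : ℕ) [Fact p.Prime] (n m : ℕ) (M : Matrix (Fin n) (Fin m) ℤ_[p]) :
    (M.map (PadicInt.Coe.ringHom : ℤ_[p] →+* ℚ_[p])).rank + 
      Module.finrank ℤ_[p] ((Fin n → ℤ_[p]) ⧸ LinearMap.range (Matrix.mulVecLin M)) = n := by
  have h1 := Submodule.finrank_quotient_add_finrank (LinearMap.range (Matrix.mulVecLin M))
  rw [Module.finrank_fin_fun] at h1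
  let f : (Fin n → ℤ_[p]) →ₗ[ℤ_[p]] (Fin n → ℚ_[p]) := 
    LinearMap.pi fun i => (Algebra.linearMap ℤ_[p] ℚ_[p]) ∘ₗ LinearMap.proj i
  have : IsLocalizedModule (nonZeroDivisors ℤ_[p]) f := inferInstance
  have h2 : LinearMap.range (Matrix.mulVecLin (M.map (PadicInt.Coe.ringHom : ℤ_[p] →+* ℚ_[p]))) =
      (LinearMap.range (Matrix.mulVecLin M)).localized' ℚ_[p] (nonZeroDivisors ℤ_[p]) f := by
    rw [Matrix.range_mulVecLin, Matrix.range_mulVecLin, Submodule.localized'_span,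
      ← Set.range_comp]
    rfl
  rw [Matrix.rank, h2, IsLocalization.finrank_eq (R := ℤ_[p]) ℚ_[p] (nonZeroDivisors ℤ_[p]) le_rfl,
    IsLocalizedModule.finrank_eq (nonZeroDivisors ℤ_[p]) 
      ((LinearMap.range (Matrix.mulVecLin M)).toLocalized' ℚ_[p] (nonZeroDivisors ℤ_[p]) f) le_rfl]
  omega

lemma aux_quot (p : ℕ) [Fact p.Prime] (N n m k : ℕ) (hk : k ≤ N)
    (M M' : Matrix (Fin n) (Fin m) ℤ_[p])
    (hMM' : ∀ i j, (p : ℤ_[p]) ^ N ∣ (M i j - M' i j)) :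
    LinearMap.range (Matrix.mulVecLin M) ≤ LinearMap.range (Matrix.mulVecLin M') ⊔ 
      Ideal.span {(p : ℤ_[p]) ^ k} • (⊤ : Submodule ℤ_[p] (Fin n → ℤ_[p])) := by
  rintro _ ⟨v, rfl⟩
  choose E hE using hMM'
  have : M = M' + (p : ℤ_[p]) ^ k • ((p : ℤ_[p]) ^ (N - k) • Matrix.of E) := by
    ext1 i j
    have := hE i j
    simp only [Matrix.add_apply, Matrix.smul_apply, smul_eq_mul, Matrix.of_apply]
    rw [← mul_assoc, ← pow_add, Nat.add_sub_cancel' hk, ← this]; ring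
  rw [this, Matrix.mulVecLin_apply, Matrix.add_mulVec, Matrix.smul_mulVec]
  exact Submodule.add_mem_sup ⟨v, rfl⟩ (Submodule.smul_mem_smul
    (Ideal.mem_span_singleton_self _) trivial)

lemma aux_quot_card (p : ℕ) [Fact p.Prime] (N n m k : ℕ) (hk : k ≤ N)
    (M M' : Matrix (Fin n) (Fin m) ℤ_[p])
    (hMM' : ∀ i j, (p : ℤ_[p]) ^ N ∣ (M i j - M' i j)) :
    Nat.card (((Fin n → ℤ_[p]) ⧸ LinearMap.range (Matrix.mulVecLin M)) ⧸
      (Ideal.span {(p : ℤ_[p]) ^ k} • (⊤ : Submodule ℤ_[p] 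
        ((Fin n → ℤ_[p]) ⧸ LinearMap.range (Matrix.mulVecLin M))))) =
    Nat.card (((Fin n → ℤ_[p]) ⧸ LinearMap.range (Matrix.mulVecLin M')) ⧸
      (Ideal.span {(p : ℤ_[p]) ^ k} • (⊤ : Submodule ℤ_[p] 
        ((Fin n → ℤ_[p]) ⧸ LinearMap.range (Matrix.mulVecLin M'))))) := by
  rw [← aux_map, ← aux_map, 
    Nat.card_congr (Submodule.quotientQuotientEquivQuotientSup _ _).toEquiv,
    Nat.card_congr (Submodule.quotientQuotientEquivQuotientSup _ _).toEquiv]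
  have : LinearMap.range (Matrix.mulVecLin M) ⊔ 
      Ideal.span {(p : ℤ_[p]) ^ k} • (⊤ : Submodule ℤ_[p] (Fin n → ℤ_[p])) = 
      LinearMap.range (Matrix.mulVecLin M') ⊔ 
      Ideal.span {(p : ℤ_[p]) ^ k} • (⊤ : Submodule ℤ_[p] (Fin n → ℤ_[p])) := by
    apply le_antisymm
    · exact sup_le (aux_quot p N n m k hk M M' hMM') le_sup_right
    · refine sup_le (aux_quot p N n m k hk M' M fun i j => ?_) le_sup_right
      rw [← neg_sub, dvd_neg]; exact hMM' i j
  rw [this]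

lemma aux_struct (p : ℕ) [Fact p.Prime] (N : ℕ) {Q : Type} [AddCommGroup Q] [Module ℤ_[p] Q]
    [Module.Finite ℤ_[p] Q]
    (hQ : ∀ x ∈ Submodule.torsion ℤ_[p] Q, (p : ℤ_[p]) ^ N • x = 0) :
    ∃ (ι : Type) (_ : Fintype ι) (e : ι → ℕ), (∀ i, e i ≠ 0) ∧ (∀ i, e i ≤ N) ∧ 
    Nonempty (Q ≃ₗ[ℤ_[p]] (Fin (Module.finrank ℤ_[p] Q) → ℤ_[p]) × 
      ((i : ι) → ℤ_[p] ⧸ Ideal.span {(p : ℤ_[p]) ^ e i})) := by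
  classical
  obtain ⟨r, ι, _, q, hq, e, ⟨f⟩⟩ := Module.equiv_free_prod_directSum (R := ℤ_[p]) (M := Q)
  have hspan : ∀ i, Submodule.span ℤ_[p] {q i ^ e i} = Ideal.span {(p : ℤ_[p]) ^ e i} := by
    intro i
    refine Ideal.span_singleton_eq_span_singleton.mpr (Associated.pow_pow ?_)
    exact IsDiscreteValuationRing.associated_of_irreducible _ (hq i) PadicInt.irreducible_p
  let g1 : (DirectSum ι fun i => ℤ_[p] ⧸ Submodule.span ℤ_[p] {q i ^ e i}) ≃ₗ[ℤ_[p]]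
      ((i : ι) → ℤ_[p] ⧸ Ideal.span {(p : ℤ_[p]) ^ e i}) :=
    (DirectSum.linearEquivFunOnFintype _ _ _).trans
      (LinearEquiv.piCongrRight fun i => Submodule.quotEquivOfEq _ _ (hspan i))
  let g2 : ((i : ι) → ℤ_[p] ⧸ Ideal.span {(p : ℤ_[p]) ^ e i}) ≃ₗ[ℤ_[p]]
      ((i : {i // e i ≠ 0}) → ℤ_[p] ⧸ Ideal.span {(p : ℤ_[p]) ^ e i.1}) := by
    refine LinearEquiv.ofBijective
      (LinearMap.pi fun i : {i // e i ≠ 0} => LinearMap.proj i.1) ⟨?_, ?_⟩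
    · intro x y h
      ext1 i
      by_cases hi : e i = 0
      · have : Subsingleton (ℤ_[p] ⧸ Ideal.span {(p : ℤ_[p]) ^ e i}) := by
          rw [Ideal.Quotient.subsingleton_iff, hi, pow_zero, Ideal.span_singleton_one]
        exact Subsingleton.elim _ _
      · exact congrFun h ⟨i, hi⟩
    · intro y
      refine ⟨fun i => if h : e i ≠ 0 then y ⟨i, h⟩ else 0, ?_⟩
      ext1 i
      simp only [LinearMap.pi_apply, LinearMap.proj_apply, dif_pos i.2]
  let F : Q ≃ₗ[ℤ_[p]] (Fin r → ℤ_[p]) × 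
      ((i : {i // e i ≠ 0}) → ℤ_[p] ⧸ Ideal.span {(p : ℤ_[p]) ^ e i.1}) := 
    f.trans (LinearEquiv.prodCongr (Finsupp.linearEquivFunOnFinite _ _ _) (g1.trans g2))
  have hp0 : (p : ℤ_[p]) ≠ 0 := PadicInt.irreducible_p.ne_zero
  have htor : ∀ x : (Fin r → ℤ_[p]) × 
      ((i : {i // e i ≠ 0}) → ℤ_[p] ⧸ Ideal.span {(p : ℤ_[p]) ^ e i.1}), x.1 = 0 → 
      x ∈ Submodule.torsion ℤ_[p] _ := by
    rintro ⟨x, y⟩ rfl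
    refine ⟨⟨(p : ℤ_[p]) ^ (∑ i, e i), mem_nonZeroDivisors_of_ne_zero (pow_ne_zero _ hp0)⟩, ?_⟩
    refine Prod.ext (smul_zero _) (funext fun i => ?_)
    obtain ⟨z, hz⟩ := Submodule.Quotient.mk_surjective _ (y i)
    change (p : ℤ_[p]) ^ (∑ i, e i) • y i = 0
    rw [← hz, ← Submodule.Quotient.mk_smul, Submodule.Quotient.mk_eq_zero, smul_eq_mul]
    exact Ideal.mul_mem_right _ _ (Ideal.mem_span_singleton.mpr
      (pow_dvd_pow _ (Finset.single_le_sum (f := e) (fun _ _ => Nat.zero_le _) (Finset.mem_univ _))))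
  have hr : Module.finrank ℤ_[p] Q = r := by
    rw [F.finrank_eq, ← finrank_quotient_eq_of_le_torsion (M' := LinearMap.ker (LinearMap.fst ℤ_[p] _ _))
      (fun x hx => htor x (LinearMap.mem_ker.mp hx)), 
      (LinearMap.quotKerEquivOfSurjective _ LinearMap.fst_surjective).finrank_eq,
      Module.finrank_fin_fun]
  rw [hr]
  refine ⟨{i // e i ≠ 0}, inferInstance, fun i => e i, fun i => i.2, fun i => ?_, ⟨F⟩⟩
  have h1 := htor (0, Pi.single i (Submodule.Quotient.mk 1)) rfl
  have h2 := hQ (F.symm (0, Pi.single i (Submodule.Quotient.mk 1))) (by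
    obtain ⟨a, ha⟩ := h1
    refine ⟨a, ?_⟩
    rw [Submonoid.smul_def, ← map_smul]
    exact (congrArg F.symm ha).trans (map_zero _))
  rw [← map_smul, LinearEquiv.map_eq_zero_iff] at h2
  have h3 := congrFun (congrArg Prod.snd h2) i
  simp only [Prod.smul_snd, Pi.smul_apply, Pi.single_eq_same] at h3
  change (p : ℤ_[p]) ^ N • (Submodule.Quotient.mk 1 : ℤ_[p] ⧸ Ideal.span {(p : ℤ_[p]) ^ e i.1}) = 0 at h3
  rw [← Submodule.Quotient.mk_smul, Submodule.Quotient.mk_eq_zero, smul_eq_mul, mul_one,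
    Ideal.mem_span_singleton] at h3
  exact (pow_dvd_pow_iff hp0 PadicInt.irreducible_p.not_isUnit).mp h3


theorem statement10 (p : ℕ) [Fact p.Prime] (N n m : ℕ)
    (M M' : Matrix (Fin n) (Fin m) ℤ_[p])
    (hMM' : ∀ i j, (p : ℤ_[p]) ^ N ∣ (M i j - M' i j))
    (hrank : (M.map (PadicInt.Coe.ringHom : ℤ_[p] →+* ℚ_[p])).rank =
      (M'.map (PadicInt.Coe.ringHom : ℤ_[p] →+* ℚ_[p])).rank)
    (hQ : ∀ x ∈ Submodule.torsion ℤ_[p]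
        ((Fin n → ℤ_[p]) ⧸ LinearMap.range (Matrix.mulVecLin M)),
      (p : ℤ_[p]) ^ N • x = 0)
    (hQ' : ∀ x ∈ Submodule.torsion ℤ_[p]
        ((Fin n → ℤ_[p]) ⧸ LinearMap.range (Matrix.mulVecLin M')),
      (p : ℤ_[p]) ^ N • x = 0) :
    Nonempty (((Fin n → ℤ_[p]) ⧸ LinearMap.range (Matrix.mulVecLin M)) ≃ₗ[ℤ_[p]]
      ((Fin n → ℤ_[p]) ⧸ LinearMap.range (Matrix.mulVecLin M'))) := by
  obtain ⟨ι, _, e, h0, hN, ⟨F⟩⟩ := aux_struct p N hQ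
  obtain ⟨ι', _, e', h0', hN', ⟨F'⟩⟩ := aux_struct p N hQ'
  have hr : Module.finrank ℤ_[p] ((Fin n → ℤ_[p]) ⧸ LinearMap.range (Matrix.mulVecLin M)) =
      Module.finrank ℤ_[p] ((Fin n → ℤ_[p]) ⧸ LinearMap.range (Matrix.mulVecLin M')) := by
    have h1 := aux_rank p n m M
    have h2 := aux_rank p n m M'
    omega
  rw [hr] at F
  obtain ⟨g, hg⟩ := aux_comb N e e' h0 h0' hN hN' (by
    intro k hk
    have h1 := aux_quot_card p N n m k hk M M' hMM'
    rw [aux_card p k _ e F, aux_card p k _ e' F'] at h1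
    have := Nat.pow_right_injective (Fact.out : p.Prime).two_le h1
    omega)
  let G1 : ((i : ι) → ℤ_[p] ⧸ Ideal.span {(p : ℤ_[p]) ^ e i}) ≃ₗ[ℤ_[p]]
      ((i : ι) → ℤ_[p] ⧸ Ideal.span {(p : ℤ_[p]) ^ e' (g i)}) :=
    LinearEquiv.piCongrRight fun i => Submodule.quotEquivOfEq _ _ (by rw [hg])
  let G2 : ((i : ι) → ℤ_[p] ⧸ Ideal.span {(p : ℤ_[p]) ^ e' (g i)}) ≃ₗ[ℤ_[p]]
      ((i : ι') → ℤ_[p] ⧸ Ideal.span {(p : ℤ_[p]) ^ e' i}) :=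
    LinearEquiv.piCongrLeft ℤ_[p] (fun i => ℤ_[p] ⧸ Ideal.span {(p : ℤ_[p]) ^ e' i}) g
  exact ⟨F.trans (LinearEquiv.trans
    (LinearEquiv.prodCongr (LinearEquiv.refl _ _) (G1.trans G2)) F'.symm)⟩
end
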